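/- Let λ be a partition with Frobenius notation λ=(p_1−1,…,p_t−1 | q_1,…,q_t), i.e. p_i=λ_i−i+1 and q_i=λ'_i−i for 1≤i≤t, where t is the number of diagonal boxes of λ. Let s=(s_{ij})∈W^diag_λ with common diagonal values a_k, and assume Re(a_{p_i−1})>1 and Re(a_{−q_i})>1 for all 1≤i≤t. Then ζ_λ(s) = det[ ζ_{(p_i,1^{q_j})}(s_{i,j}) ]_{1≤i,j≤t}, where s_{i,j}∈W_{(p_i,1^{q_j})} is the hook tableau whose first row is (a_0, a_1, …, a_{p_i−1}) and whose first column is (a_0, a_{−1}, …, a_{−q_j}) from top to bottom (Giambelli formula). -/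

import Mathlib

/-!
The Giambelli formula is proved for tableaux with entries at most `N`, where all sums are finite,
and then `N → ∞`.

*Finite identity.* Give a box of content `k` (on the `k`-th diagonal) with entry `n` an arbitrary
weight `w k n`. Order the pairs `(n, k)` lexicographically; a filling is semi-standard exactly
when the pairs `(entry, content)` strictly increase along rows and columns. Hence the bound on
the entries can be raised from `N` to `N + 1` one diagonal at a time, in order of increasing
content, and raising it on the `k`-th diagonal adds precisely the tableaux with entry `N + 1` at
the corner of content `k`, which is unique if it exists (`bddSum_step`):
`F' D = F D + w k (N + 1) * F (D minus that corner)`.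
In Frobenius coordinates `(α | β)`, removing a corner of content `k > 0` lowers an arm
`α i = k` by one, for `k < 0` it lowers a leg, and for `k = 0` it deletes a last pair `(0 | 0)`.
The matrix of hook values changes in one row, in one column, or in its last diagonal entry
accordingly. So multilinearity of the determinant, with a vanishing determinant (two equal rows)
when the lowered arm is already present, shows that the formula is preserved by each step
(`Giambelli.step`). It holds trivially when no entries are allowed, hence for every `N`
(`giambelli_bddSum`).

*Convergence.* The largest entry of a tableau occurs at a corner, where the exponent has real part
at least `1 + δ`. Distributing the surplus `δ` over all boxes bounds the series by a product of
convergent series `∑ n ^ (-(1 + ε))` (`summable_wt`). This applies to the diagram of `lam` and to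
all the hooks, so the bounded sums converge to the zeta values (`tendsto_schurZeta`) and the
continuity of the determinant gives the theorem.
-/

open scoped BigOperators

noncomputable section

namespace SMZ

/-- Box `(i,j)` (0-indexed) lies in the Young diagram of the partition `lam`. -/
def InDiag (lam : ℕ → ℕ) (p : ℕ × ℕ) : Prop := p.2 < lam p.1

/-- `(i,j)` is a corner of the Young diagram of `lam`. -/
def IsCorner (lam : ℕ → ℕ) (p : ℕ × ℕ) : Prop :=
  InDiag lam p ∧ ¬ InDiag lam (p.1 + 1, p.2) ∧ ¬ InDiag lam (p.1, p.2 + 1)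

/-- `lam` is the part function of a partition with exactly `r` positive parts. -/
def IsPartitionWith (r : ℕ) (lam : ℕ → ℕ) : Prop :=
  Antitone lam ∧ ∀ i, 0 < lam i ↔ i < r

/-- Semi-standard Young tableau of shape `lam`, normalized to be `0` off the diagram. -/
structure IsSSYT (lam : ℕ → ℕ) (m : ℕ × ℕ → ℕ) : Prop where
  zero_off : ∀ p, ¬ InDiag lam p → m p = 0
  pos : ∀ p, InDiag lam p → 0 < m p
  row_le : ∀ i j, InDiag lam (i, j + 1) → m (i, j) ≤ m (i, j + 1)
  col_lt : ∀ i j, InDiag lam (i + 1, j) → m (i, j) < m (i + 1, j)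

/-- The summand `1 / M^s` of the Schur multiple zeta series. -/
def term (r : ℕ) (lam : ℕ → ℕ) (s : ℕ × ℕ → ℂ) (m : ℕ × ℕ → ℕ) : ℂ :=
  ∏ i ∈ Finset.range r, ∏ j ∈ Finset.range (lam i), (m (i, j) : ℂ) ^ (-(s (i, j)))

/-- The Schur multiple zeta function `ζ_λ(s)`. -/
def schurZeta (r : ℕ) (lam : ℕ → ℕ) (s : ℕ × ℕ → ℂ) : ℂ :=
  ∑' M : {m : ℕ × ℕ → ℕ // IsSSYT lam m}, term r lam s M.1

/-- The region `W_λ` of (sufficient) absolute convergence. -/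
def MemW (lam : ℕ → ℕ) (s : ℕ × ℕ → ℂ) : Prop :=
  (∀ p, InDiag lam p → 1 ≤ (s p).re) ∧ ∀ p, IsCorner lam p → 1 < (s p).re

/-- Euler–Zagier multiple zeta function. -/
def mzv {n : ℕ} (s : Fin n → ℂ) : ℂ :=
  ∑' f : {f : Fin n → ℕ // StrictMono f ∧ ∀ i, 0 < f i},
    ∏ i, (f.1 i : ℂ) ^ (-(s i))

/-- Euler–Zagier multiple zeta-star function. -/
def mzvStar {n : ℕ} (s : Fin n → ℂ) : ℂ :=
  ∑' f : {f : Fin n → ℕ // Monotone f ∧ ∀ i, 0 < f i},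
    ∏ i, (f.1 i : ℂ) ^ (-(s i))

/-- `ζ⋆(a start, a (start+1), …)` with `len` terms; `1` if `len = 0`, `0` if `len < 0`. -/
def mzvStarSeq (a : ℤ → ℂ) (start len : ℤ) : ℂ :=
  if len < 0 then 0 else mzvStar fun i : Fin len.toNat => a (start + (i : ℕ))

/-- `ζ(a start, a (start-1), …)` with `len` terms; `1` if `len = 0`, `0` if `len < 0`. -/
def mzvSeqDesc (a : ℤ → ℂ) (start len : ℤ) : ℂ :=
  if len < 0 then 0 else mzv fun i : Fin len.toNat => a (start - (i : ℕ))

/-- The conjugate partition: `conjPart r lam c` is the number of rows `i < r` with a box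
in column `c`, i.e. the (0-indexed) `c`-th part of `λ'`. -/
def conjPart (r : ℕ) (lam : ℕ → ℕ) (c : ℕ) : ℕ :=
  ((Finset.range r).filter fun i => c < lam i).card

end SMZ
namespace SMZ

/-- The part function of the hook partition `(p, 1^q)`. -/
def hookLam (p q : ℕ) : ℕ → ℕ := fun i => if i = 0 then p else if i ≤ q then 1 else 0

/-- The number of diagonal boxes of the partition `lam` (with at most `r` parts). -/
def diagLength (r : ℕ) (lam : ℕ → ℕ) : ℕ :=
  ((Finset.range r).filter fun i => i < lam i).card

end SMZ

namespace SMZ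

/-! ### Tableaux on finite diagrams -/

/-- The content (diagonal index) of a box. -/
def content (p : ℕ × ℕ) : ℤ := (p.2 : ℤ) - (p.1 : ℤ)

/-- Semi-standard tableaux supported on a finite set `D` of boxes. -/
structure SSYTOn (D : Finset (ℕ × ℕ)) (m : ℕ × ℕ → ℕ) : Prop where
  zero_off : ∀ p, p ∉ D → m p = 0
  pos : ∀ p ∈ D, 0 < m p
  row_le : ∀ i j, (i, j + 1) ∈ D → m (i, j) ≤ m (i, j + 1)
  col_lt : ∀ i j, (i + 1, j) ∈ D → m (i, j) < m (i + 1, j)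

/-- The semi-standard tableaux on `D` whose entries on the `k`-th diagonal are at most `b k`. -/
def bddTab (D : Finset (ℕ × ℕ)) (b : ℤ → ℕ) : Set (ℕ × ℕ → ℕ) :=
  {m | SSYTOn D m ∧ ∀ p ∈ D, m p ≤ b (content p)}

lemma restrict_injOn (D : Finset (ℕ × ℕ)) :
    Set.InjOn (fun (m : ℕ × ℕ → ℕ) (p : D) => m p) {m | SSYTOn D m} := by
  intro m hm m' hm' h
  funext p
  by_cases hp : p ∈ D
  · exact congrFun h ⟨p, hp⟩
  · rw [hm.zero_off p hp, hm'.zero_off p hp]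

lemma bddTab_finite (D : Finset (ℕ × ℕ)) (b : ℤ → ℕ) : (bddTab D b).Finite := by
  refine Set.Finite.of_injOn (f := fun (m : ℕ × ℕ → ℕ) (p : D) => m p)
    (t := {f | ∀ p : D, f p ∈ Set.Iic (b (content p))}) ?_ ?_ ?_
  · intro m hm p
    exact hm.2 p p.2
  · exact (restrict_injOn D).mono fun m hm => hm.1
  · exact Set.Finite.pi' fun p => Set.finite_Iic _

/-- The weight of a filling: a box of content `k` with entry `n` contributes `w k n`. -/
def wt (w : ℤ → ℕ → ℂ) (D : Finset (ℕ × ℕ)) (m : ℕ × ℕ → ℕ) : ℂ :=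
  ∏ p ∈ D, w (content p) (m p)

/-- The generating function of the semi-standard tableaux on `D` bounded by `b`. -/
def bddSum (w : ℤ → ℕ → ℂ) (b : ℤ → ℕ) (D : Finset (ℕ × ℕ)) : ℂ :=
  ∑ m ∈ (bddTab_finite D b).toFinset, wt w D m

/-- The bound `N + 1` on the diagonals before the `k`-th one, and `N` from there on. -/
def stepBound (N : ℕ) (k j : ℤ) : ℕ := if j < k then N + 1 else N

/-- The corners of `D` of content `k`. -/
def corners (D : Finset (ℕ × ℕ)) (k : ℤ) : Finset (ℕ × ℕ) :=
  D.filter fun p => content p = k ∧ (p.1 + 1, p.2) ∉ D ∧ (p.1, p.2 + 1) ∉ D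

lemma mem_corners {D : Finset (ℕ × ℕ)} {k : ℤ} {p : ℕ × ℕ} :
    p ∈ corners D k ↔
      p ∈ D ∧ content p = k ∧ (p.1 + 1, p.2) ∉ D ∧ (p.1, p.2 + 1) ∉ D := by
  simp [corners]

/-- In a lower set, the boxes on the diagonal of a corner lie weakly north-west of it. -/
lemma le_corner {D : Finset (ℕ × ℕ)} (hD : IsLowerSet (D : Set (ℕ × ℕ))) {k : ℤ}
    {p q : ℕ × ℕ} (hp : p ∈ corners D k) (hq : q ∈ D) (hk : content q = k) :
    q.1 ≤ p.1 ∧ q.2 ≤ p.2 := by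
  rw [mem_corners] at hp
  obtain ⟨-, hc, hdown, -⟩ := hp
  simp only [content] at hc hk
  by_contra h
  refine hdown (hD (a := q) ?_ hq)
  refine Prod.mk_le_mk.2 ?_ |>.trans (le_of_eq rfl : (q.1, q.2) ≤ q)
  omega

lemma corner_unique {D : Finset (ℕ × ℕ)} (hD : IsLowerSet (D : Set (ℕ × ℕ))) {k : ℤ}
    {p q : ℕ × ℕ} (hp : p ∈ corners D k) (hq : q ∈ corners D k) : q = p := by
  have h1 := le_corner hD hp (mem_corners.1 hq).1 (mem_corners.1 hq).2.1
  have h2 := le_corner hD hq (mem_corners.1 hp).1 (mem_corners.1 hp).2.1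
  exact Prod.ext (by omega) (by omega)

/-- Under the bound `stepBound N (k + 1)`, a box of content `k` with entry `N + 1` is a corner. -/
lemma corner_of_eq {D : Finset (ℕ × ℕ)} {N : ℕ} {k : ℤ} {m : ℕ × ℕ → ℕ}
    (hm : m ∈ bddTab D (stepBound N (k + 1))) {p : ℕ × ℕ} (hp : p ∈ D) (hk : content p = k)
    (he : m p = N + 1) : p ∈ corners D k := by
  obtain ⟨i, j⟩ := p
  obtain ⟨hs, hb⟩ := hm
  simp only [content] at hk
  refine mem_corners.2 ⟨hp, hk, fun h => ?_, fun h => ?_⟩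
  · have h1 := hs.col_lt i j h
    have h2 := hb _ h
    have h3 : content (i + 1, j) = k - 1 := by simp only [content]; omega
    simp only [stepBound, h3] at h2
    split_ifs at h2 <;> omega
  · have h1 := hs.row_le i j h
    have h2 := hb _ h
    have h3 : content (i, j + 1) = k + 1 := by simp only [content]; omega
    simp only [stepBound, h3] at h2
    split_ifs at h2 <;> omega

lemma isLowerSet_erase {D : Finset (ℕ × ℕ)} (hD : IsLowerSet (D : Set (ℕ × ℕ))) {k : ℤ}
    {p : ℕ × ℕ} (hp : p ∈ corners D k) : IsLowerSet ((D.erase p : Finset _) : Set (ℕ × ℕ)) := by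
  obtain ⟨i, j⟩ := p
  obtain ⟨-, -, h1, h2⟩ := mem_corners.1 hp
  rintro ⟨a, b⟩ ⟨c, d⟩ hle hab
  simp only [Finset.coe_erase, Set.mem_sdiff, Finset.mem_coe, Set.mem_singleton_iff,
    Prod.mk.injEq] at hab ⊢
  rw [Prod.mk_le_mk] at hle
  refine ⟨hD (Prod.mk_le_mk.2 hle) hab.1, ?_⟩
  rintro ⟨rfl, rfl⟩
  rcases Nat.lt_or_ge c a with h | h
  · exact h1 (hD (Prod.mk_le_mk.2 (by omega)) hab.1)
  · exact h2 (hD (a := (a, b)) (Prod.mk_le_mk.2 (by omega)) hab.1)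

/-- If the corner `p` of content `k` exists, raising the bound on the `k`-th diagonal from `N`
to `N + 1` adds exactly the tableaux with entry `N + 1` at `p`. -/
lemma bddTab_step {D : Finset (ℕ × ℕ)} (hD : IsLowerSet (D : Set (ℕ × ℕ))) {N : ℕ} {k : ℤ}
    {p : ℕ × ℕ} (hp : p ∈ corners D k) :
    bddTab D (stepBound N (k + 1)) = bddTab D (stepBound N k) ∪
      (fun m => Function.update m p (N + 1)) '' bddTab (D.erase p) (stepBound N k) := by
  have hpD := (mem_corners.1 hp).1
  have hpk := (mem_corners.1 hp).2.1
  have hdown := (mem_corners.1 hp).2.2.1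
  have hright := (mem_corners.1 hp).2.2.2
  have hE := isLowerSet_erase hD hp
  ext m
  constructor
  · intro hm
    by_cases he : m p = N + 1
    · right
      refine ⟨Function.update m p 0, ⟨⟨?_, ?_, ?_, ?_⟩, ?_⟩, ?_⟩
      · intro q hq
        by_cases hqp : q = p
        · simp [hqp]
        · rw [Function.update_of_ne hqp]
          exact hm.1.zero_off q fun h => hq (Finset.mem_erase.2 ⟨hqp, h⟩)
      · intro q hq
        rw [Function.update_of_ne (Finset.mem_erase.1 hq).1]
        exact hm.1.pos q (Finset.mem_erase.1 hq).2
      · intro i j h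
        have h1 : (i, j) ∈ D.erase p := hE (Prod.mk_le_mk.2 (by omega)) h
        rw [Function.update_of_ne (Finset.mem_erase.1 h).1,
          Function.update_of_ne (Finset.mem_erase.1 h1).1]
        exact hm.1.row_le _ _ (Finset.mem_erase.1 h).2
      · intro i j h
        have h1 : (i, j) ∈ D.erase p := hE (Prod.mk_le_mk.2 (by omega)) h
        rw [Function.update_of_ne (Finset.mem_erase.1 h).1,
          Function.update_of_ne (Finset.mem_erase.1 h1).1]
        exact hm.1.col_lt _ _ (Finset.mem_erase.1 h).2
      · intro q hq
        obtain ⟨hqp, hqD⟩ := Finset.mem_erase.1 hq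
        rw [Function.update_of_ne hqp]
        have hb := hm.2 q hqD
        by_cases hqk : content q = k
        -- a second box on the same diagonal has an entry different from `N + 1`
        · have : m q ≠ N + 1 := fun h => hqp (corner_unique hD hp (corner_of_eq hm hqD hqk h))
          simp only [stepBound] at hb ⊢
          split_ifs at hb ⊢ <;> omega
        · simp only [stepBound] at hb ⊢
          split_ifs at hb ⊢ <;> omega
      · simp [← he]
    · left
      refine ⟨hm.1, fun q hq => ?_⟩
      have hb := hm.2 q hq
      by_cases hqk : content q = k
      · have : m q ≠ N + 1 := fun h => he
          (by rw [← corner_unique hD hp (corner_of_eq hm hq hqk h), h])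
        simp only [stepBound] at hb ⊢
        split_ifs at hb ⊢ <;> omega
      · simp only [stepBound] at hb ⊢
        split_ifs at hb ⊢ <;> omega
  · rintro (hm | ⟨m, hm, rfl⟩)
    · refine ⟨hm.1, fun q hq => (hm.2 q hq).trans ?_⟩
      simp only [stepBound]
      split_ifs <;> omega
    · have hbd : ∀ q, q ≠ p → q ∈ D → m q ≤ stepBound N k (content q) := fun q h1 h2 =>
        hm.2 q (Finset.mem_erase.2 ⟨h1, h2⟩)
      refine ⟨⟨?_, ?_, ?_, ?_⟩, ?_⟩
      · intro q hq
        have hqp : q ≠ p := fun h => hq (h ▸ hpD)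
        simp only [Function.update_of_ne hqp]
        exact hm.1.zero_off q fun h => hq (Finset.mem_erase.1 h).2
      · intro q hq
        by_cases hqp : q = p
        · simp [hqp]
        · simp only [Function.update_of_ne hqp]
          exact hm.1.pos q (Finset.mem_erase.2 ⟨hqp, hq⟩)
      · intro i j h
        have h1 : (i, j) ∈ D := hD (Prod.mk_le_mk.2 (by omega)) h
        by_cases e1 : (i, j + 1) = p
        · have e2 : (i, j) ≠ p := by rw [← e1]; simp
          have := hbd _ e2 h1
          simp only [e1, Function.update_self, Function.update_of_ne e2]
          simp only [stepBound] at this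
          split_ifs at this <;> omega
        · have e2 : (i, j) ≠ p := by rintro rfl; exact hright h
          simp only [Function.update_of_ne e1, Function.update_of_ne e2]
          exact hm.1.row_le _ _ (Finset.mem_erase.2 ⟨e1, h⟩)
      · intro i j h
        have h1 : (i, j) ∈ D := hD (Prod.mk_le_mk.2 (by omega)) h
        by_cases e1 : (i + 1, j) = p
        · have e2 : (i, j) ≠ p := by rw [← e1]; simp
          have := hbd _ e2 h1
          simp only [e1, Function.update_self, Function.update_of_ne e2]
          have h3 : content (i, j) = k + 1 := by
            rw [← e1] at hpk
            simp only [content] at hpk ⊢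
            omega
          simp only [stepBound, h3] at this
          split_ifs at this <;> omega
        · have e2 : (i, j) ≠ p := by rintro rfl; exact hdown h
          simp only [Function.update_of_ne e1, Function.update_of_ne e2]
          exact hm.1.col_lt _ _ (Finset.mem_erase.2 ⟨e1, h⟩)
      · intro q hq
        by_cases hqp : q = p
        · simp [hqp, hpk, stepBound]
        · simp only [Function.update_of_ne hqp]
          refine (hbd q hqp hq).trans ?_
          simp only [stepBound]
          split_ifs <;> omega

/-- Raising the bound on one diagonal changes the generating function by the removal of the
corner on that diagonal. -/
lemma bddSum_step (w : ℤ → ℕ → ℂ) (N : ℕ) (k : ℤ) {D : Finset (ℕ × ℕ)}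
    (hD : IsLowerSet (D : Set (ℕ × ℕ))) :
    bddSum w (stepBound N (k + 1)) D = bddSum w (stepBound N k) D +
      w k (N + 1) * ∑ p ∈ corners D k, bddSum w (stepBound N k) (D.erase p) := by
  classical
  rcases (corners D k).eq_empty_or_nonempty with he | ⟨p, hp⟩
  · rw [he, Finset.sum_empty, mul_zero, add_zero]
    have : bddTab D (stepBound N (k + 1)) = bddTab D (stepBound N k) := by
      ext m
      refine ⟨fun hm => ⟨hm.1, fun q hq => ?_⟩, fun hm => ⟨hm.1, fun q hq => ?_⟩⟩
      · have hb := hm.2 q hq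
        have : content q = k → m q ≠ N + 1 := fun h h' => by
          have := corner_of_eq hm hq h h'
          simp [he] at this
        simp only [stepBound] at hb ⊢
        split_ifs at hb ⊢ <;> omega
      · refine (hm.2 q hq).trans ?_
        simp only [stepBound]
        split_ifs <;> omega
    simp only [bddSum, this]
  · have hc : corners D k = {p} :=
      Finset.eq_singleton_iff_unique_mem.2 ⟨hp, fun q hq => corner_unique hD hp hq⟩
    obtain ⟨hpD, hpk, -, -⟩ := mem_corners.1 hp
    rw [hc, Finset.sum_singleton]
    have hU : (bddTab_finite D (stepBound N (k + 1))).toFinset =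
        (bddTab_finite D (stepBound N k)).toFinset ∪
          (bddTab_finite (D.erase p) (stepBound N k)).toFinset.image
            (fun m => Function.update m p (N + 1)) := by
      ext m
      simp only [Set.Finite.mem_toFinset, Finset.mem_union, Finset.mem_image, bddTab_step hD hp,
        Set.mem_union, Set.mem_image]
    unfold bddSum
    rw [hU, Finset.sum_union, Finset.sum_image, Finset.mul_sum]
    · congr 1
      refine Finset.sum_congr rfl fun m _ => ?_
      unfold wt
      rw [← Finset.mul_prod_erase D _ hpD, Function.update_self, hpk]
      congr 1
      refine Finset.prod_congr rfl fun q hq => ?_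
      rw [Function.update_of_ne (Finset.mem_erase.1 hq).1]
    · intro m hm m' hm' h
      simp only [Finset.mem_coe, Set.Finite.mem_toFinset] at hm hm'
      funext q
      by_cases hqp : q = p
      · subst hqp
        rw [hm.1.zero_off q (by simp), hm'.1.zero_off q (by simp)]
      · simpa [Function.update_of_ne hqp] using congrFun h q
    · rw [Finset.disjoint_left]
      intro m hm hm'
      simp only [Set.Finite.mem_toFinset, Finset.mem_image] at hm hm'
      obtain ⟨m', -, rfl⟩ := hm'
      have := hm.2 p hpD
      simp [stepBound, hpk] at this

end SMZ
namespace SMZ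

/-! ### Frobenius coordinates and the determinant -/

/-- The diagram with Frobenius coordinates `(α 0, …, α (t-1) | β 0, …, β (t-1))`: the union of
the hooks at `(i, i)` with arm `α i` and leg `β i`, for `i < t`. -/
def frob (t : ℕ) (α β : ℕ → ℕ) : Finset (ℕ × ℕ) :=
  (Finset.range t).biUnion fun i =>
    (Finset.range (α i + 1)).image (fun c => (i, i + c)) ∪
      (Finset.range (β i + 1)).image (fun c => (i + c, i))

lemma mem_frob {t : ℕ} {α β : ℕ → ℕ} {a b : ℕ} :
    (a, b) ∈ frob t α β ↔
      (a < t ∧ a ≤ b ∧ b ≤ a + α a) ∨ (b < t ∧ b ≤ a ∧ a ≤ b + β b) := by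
  simp only [frob, Finset.mem_biUnion, Finset.mem_range, Finset.mem_union, Finset.mem_image,
    Prod.mk.injEq]
  constructor
  · rintro ⟨i, hi, ⟨c, hc, rfl, rfl⟩ | ⟨c, hc, rfl, rfl⟩⟩
    · left; omega
    · right; omega
  · rintro (⟨h1, h2, h3⟩ | ⟨h1, h2, h3⟩)
    · exact ⟨a, h1, Or.inl ⟨b - a, by omega, rfl, by omega⟩⟩
    · exact ⟨b, h1, Or.inr ⟨a - b, by omega, by omega, rfl⟩⟩

/-- The hook with arm `a` and leg `b`. -/
def hook (a b : ℕ) : Finset (ℕ × ℕ) := frob 1 (fun _ => a) (fun _ => b)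

lemma mem_hook {a b i j : ℕ} :
    (i, j) ∈ hook a b ↔ (i = 0 ∧ j ≤ a) ∨ (j = 0 ∧ i ≤ b) := by
  rw [hook, mem_frob]
  constructor
  · rintro (h | h)
    · left; omega
    · right; omega
  · rintro (⟨rfl, h⟩ | ⟨rfl, h⟩)
    · left; omega
    · right; omega

/-- `α` is strictly decreasing on `{0, …, t - 1}`. -/
def Decr (t : ℕ) (α : ℕ → ℕ) : Prop := ∀ i j, i < j → j < t → α j < α i

lemma Decr.add_le {t : ℕ} {α : ℕ → ℕ} (h : Decr t α) {i j : ℕ} (hij : i ≤ j) (hj : j < t) :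
    α j + (j - i) ≤ α i := by
  induction j, hij using Nat.le_induction with
  | base => simp
  | succ j hij ih =>
    have h1 := ih (by omega)
    have h2 := h j (j + 1) (by omega) hj
    omega

lemma Decr.inj {t : ℕ} {α : ℕ → ℕ} (h : Decr t α) {i j : ℕ} (hi : i < t) (hj : j < t)
    (he : α i = α j) : i = j := by
  rcases lt_trichotomy i j with h1 | h1 | h1
  · have := h i j h1 hj; omega
  · exact h1
  · have := h j i h1 hi; omega

lemma decr_one (α : ℕ → ℕ) : Decr 1 α := fun i j h1 h2 => by omega

lemma frob_isLowerSet {t : ℕ} {α β : ℕ → ℕ} (hα : Decr t α) (hβ : Decr t β) :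
    IsLowerSet ((frob t α β : Finset _) : Set (ℕ × ℕ)) := by
  rintro ⟨a, b⟩ ⟨c, d⟩ hle hab
  rw [Prod.mk_le_mk] at hle
  rw [Finset.mem_coe, mem_frob] at hab ⊢
  rcases hab with ⟨h1, h2, h3⟩ | ⟨h1, h2, h3⟩
  · rcases le_total c d with h | h
    · have := hα.add_le hle.1 h1
      left; omega
    · have := hβ.add_le (i := d) (j := a) (by omega) h1
      right; omega
  · rcases le_total c d with h | h
    · have := hα.add_le (i := c) (j := b) (by omega) h1
      left; omega
    · have := hβ.add_le hle.2 h1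
      right; omega

lemma hook_isLowerSet (a b : ℕ) : IsLowerSet ((hook a b : Finset _) : Set (ℕ × ℕ)) :=
  frob_isLowerSet (decr_one _) (decr_one _)

/-- The matrix of the values of `F` on the hooks with arms `α i` and legs `β j`. -/
def hookMat (F : Finset (ℕ × ℕ) → ℂ) (t : ℕ) (α β : ℕ → ℕ) : Matrix (Fin t) (Fin t) ℂ :=
  Matrix.of fun i j => F (hook (α i) (β j))

/-- `F` satisfies the Giambelli formula on all diagrams with arms and legs at most `K`. -/
def Giambelli (K : ℕ) (F : Finset (ℕ × ℕ) → ℂ) : Prop :=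
  ∀ (t : ℕ) (α β : ℕ → ℕ), Decr t α → Decr t β → (∀ i < t, α i ≤ K) → (∀ i < t, β i ≤ K) →
    F (frob t α β) = (hookMat F t α β).det

/-- `F'` arises from `F` by allowing one more box, of content `k` and weight `x`. -/
def IsStep (k : ℤ) (x : ℂ) (F F' : Finset (ℕ × ℕ) → ℂ) : Prop :=
  ∀ D : Finset (ℕ × ℕ), IsLowerSet (D : Set (ℕ × ℕ)) →
    F' D = F D + x * ∑ p ∈ corners D k, F (D.erase p)

lemma mem_corners_pos {t n : ℕ} {α β : ℕ → ℕ} (hα : Decr t α) {a b : ℕ} :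
    (a, b) ∈ corners (frob t α β) ((n : ℤ) + 1) ↔
      a < t ∧ b = a + n + 1 ∧ α a = n + 1 ∧ ∀ j < t, α j ≠ n := by
  rw [mem_corners]
  simp only [mem_frob, content]
  constructor
  · rintro ⟨h1, h2, h3, h4⟩
    have hα' : α a = n + 1 := by omega
    refine ⟨by omega, by omega, hα', fun j hj he => ?_⟩
    have hja : a < j := by
      by_contra h
      have := hα.add_le (i := j) (j := a) (by omega) (by omega)
      omega
    -- then `j = a + 1`, and the box below `(a, b)` is in the diagram
    have := hα.add_le (i := a) (j := j) (by omega) hj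
    have hj' : j = a + 1 := by omega
    subst hj'
    omega
  · rintro ⟨h1, rfl, h3, h4⟩
    refine ⟨by omega, by omega, fun h => ?_, by omega⟩
    have h5 : a + 1 < t := by omega
    have := hα a (a + 1) (by omega) h5
    have := h4 (a + 1) h5
    omega

lemma frob_erase_pos {t n i : ℕ} {α β : ℕ → ℕ} (hi : i < t) (h : α i = n + 1) :
    (frob t α β).erase (i, i + n + 1) = frob t (Function.update α i n) β := by
  ext ⟨a, b⟩
  rw [Finset.mem_erase, mem_frob, mem_frob]
  simp only [ne_eq, Prod.mk.injEq]
  by_cases ha : a = i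
  · subst ha
    rw [Function.update_self]
    omega
  · rw [Function.update_of_ne ha]
    omega

lemma hook_erase_pos (n b : ℕ) : (hook (n + 1) b).erase (0, n + 1) = hook n b := by
  ext ⟨i, j⟩
  rw [Finset.mem_erase, mem_hook, mem_hook]
  simp only [ne_eq, Prod.mk.injEq]
  omega

lemma hook_step_pos {n : ℕ} {x : ℂ} {F F' : Finset (ℕ × ℕ) → ℂ} (hF : IsStep (n + 1) x F F')
    (a b : ℕ) :
    F' (hook a b) = F (hook a b) + if a = n + 1 then x * F (hook n b) else 0 := by
  rw [hF _ (hook_isLowerSet a b)]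
  congr 1
  split_ifs with h
  · subst h
    have : corners (hook (n + 1) b) ((n : ℤ) + 1) = {(0, n + 1)} := by
      ext ⟨i, j⟩
      rw [hook, mem_corners_pos (decr_one _)]
      simp only [Finset.mem_singleton, Prod.mk.injEq]
      refine ⟨fun h => by omega, fun h => ⟨by omega, by omega, by simp, fun j _ => by omega⟩⟩
    rw [this, Finset.sum_singleton, hook_erase_pos]
  · have : corners (hook a b) ((n : ℤ) + 1) = ∅ := by
      ext ⟨i, j⟩
      rw [hook, mem_corners_pos (decr_one _)]
      simp only [Finset.notMem_empty, iff_false]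
      exact fun h' => h h'.2.2.1
    rw [this, Finset.sum_empty, mul_zero]

/-- A step of positive content adds a multiple of the row of arm `n` to the row of arm `n + 1`;
by multilinearity of the determinant the Giambelli formula persists. -/
lemma Giambelli.step_pos {K n : ℕ} {x : ℂ} {F F' : Finset (ℕ × ℕ) → ℂ}
    (hG : Giambelli K F) (hF : IsStep (n + 1) x F F') : Giambelli K F' := by
  intro t α β hα hβ hαK hβK
  rw [hF _ (frob_isLowerSet hα hβ), hG t α β hα hβ hαK hβK]
  by_cases h : ∃ i < t, α i = n + 1
  · obtain ⟨i, hi, hαi⟩ := h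
    have hM : hookMat F' t α β = (hookMat F t α β).updateRow ⟨i, hi⟩
        (hookMat F t α β ⟨i, hi⟩ + x • fun j : Fin t => F (hook n (β j))) := by
      ext i' j'
      by_cases hii : i' = ⟨i, hi⟩
      · subst hii
        simp [hookMat, hook_step_pos hF, hαi]
      · have : α i' ≠ n + 1 := fun h => hii (Fin.ext (hα.inj i'.2 hi (h.trans hαi.symm)))
        rw [Matrix.updateRow_ne hii]
        simp [hookMat, hook_step_pos hF, this]
    rw [hM, Matrix.det_updateRow_add, Matrix.det_updateRow_smul, Matrix.updateRow_eq_self]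
    congr 2
    by_cases h2 : ∃ j < t, α j = n
    · obtain ⟨j, hj, hαj⟩ := h2
      have hc : corners (frob t α β) ((n : ℤ) + 1) = ∅ := by
        ext ⟨a, b⟩
        rw [mem_corners_pos hα]
        simp only [Finset.notMem_empty, iff_false]
        rintro ⟨-, -, -, h⟩
        exact h j hj hαj
      have hne : (⟨i, hi⟩ : Fin t) ≠ ⟨j, hj⟩ := by
        intro h
        rw [Fin.mk.injEq] at h
        subst h
        omega
      rw [hc, Finset.sum_empty]
      symm
      apply Matrix.det_zero_of_row_eq hne
      rw [Matrix.updateRow_self, Matrix.updateRow_ne hne.symm]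
      ext j'
      simp [hookMat, hαj]
    · push Not at h2
      have hc : corners (frob t α β) ((n : ℤ) + 1) = {(i, i + n + 1)} := by
        ext ⟨a, b⟩
        rw [mem_corners_pos hα, Finset.mem_singleton, Prod.mk.injEq]
        constructor
        · rintro ⟨h3, h4, h5, -⟩
          have := hα.inj h3 hi (h5.trans hαi.symm)
          omega
        · rintro ⟨rfl, rfl⟩
          exact ⟨hi, rfl, hαi, h2⟩
      rw [hc, Finset.sum_singleton, frob_erase_pos hi hαi, hG]
      · congr 1
        ext i' j'
        by_cases hii : i' = ⟨i, hi⟩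
        · subst hii
          simp [hookMat]
        · have : (i' : ℕ) ≠ i := fun h => hii (Fin.ext h)
          rw [Matrix.updateRow_ne hii]
          simp [hookMat, Function.update_of_ne this]
      · intro c d hcd hd
        have h3 := hα c d hcd hd
        rcases eq_or_ne c i with rfl | hc'
        · have := h2 d hd
          rw [Function.update_self, Function.update_of_ne (by omega)]
          omega
        · rw [Function.update_of_ne hc']
          rcases eq_or_ne d i with rfl | hd'
          · rw [Function.update_self]; omega
          · rwa [Function.update_of_ne hd']
      · exact hβ
      · intro c hct
        have h3 := hαK c hct
        rcases eq_or_ne c i with rfl | hc'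
        · rw [Function.update_self]; omega
        · rwa [Function.update_of_ne hc']
      · exact hβK
  · push Not at h
    have hc : corners (frob t α β) ((n : ℤ) + 1) = ∅ := by
      ext ⟨a, b⟩
      rw [mem_corners_pos hα]
      simp only [Finset.notMem_empty, iff_false]
      rintro ⟨h1, -, h2, -⟩
      exact h a h1 h2
    rw [hc, Finset.sum_empty, mul_zero, add_zero]
    congr 1
    ext row col
    simp [hookMat, hook_step_pos hF, h row row.2]

/-- Transposition of diagrams. -/
def tr (D : Finset (ℕ × ℕ)) : Finset (ℕ × ℕ) := D.map (Equiv.prodComm ℕ ℕ).toEmbedding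

lemma mem_tr {D : Finset (ℕ × ℕ)} {a b : ℕ} : (a, b) ∈ tr D ↔ (b, a) ∈ D := by
  simp [tr]

lemma tr_frob (t : ℕ) (α β : ℕ → ℕ) : tr (frob t α β) = frob t β α := by
  ext ⟨a, b⟩
  rw [mem_tr, mem_frob, mem_frob, or_comm]

lemma Giambelli.tr {K : ℕ} {F : Finset (ℕ × ℕ) → ℂ} (hG : Giambelli K F) :
    Giambelli K fun D => F (tr D) := by
  intro t α β hα hβ hαK hβK
  beta_reduce
  rw [tr_frob, hG t β α hβ hα hβK hαK, ← Matrix.det_transpose]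
  congr 1
  ext i j
  simp [hookMat, hook, tr_frob]

lemma IsStep.tr {k : ℤ} {x : ℂ} {F F' : Finset (ℕ × ℕ) → ℂ} (hF : IsStep k x F F') :
    IsStep (-k) x (fun D => F (tr D)) (fun D => F' (tr D)) := by
  intro D hD
  have hl : IsLowerSet ((SMZ.tr D : Finset _) : Set (ℕ × ℕ)) := by
    rintro ⟨a, b⟩ ⟨c, d⟩ hle hab
    rw [Finset.mem_coe, mem_tr] at hab ⊢
    rw [Prod.mk_le_mk] at hle
    exact hD (Prod.mk_le_mk.2 hle.symm) hab
  have hc : corners (SMZ.tr D) k = SMZ.tr (corners D (-k)) := by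
    ext ⟨a, b⟩
    rw [mem_tr, mem_corners, mem_corners]
    simp only [mem_tr, content]
    constructor
    · rintro ⟨h1, h2, h3, h4⟩
      exact ⟨h1, by omega, h4, h3⟩
    · rintro ⟨h1, h2, h3, h4⟩
      exact ⟨h1, by omega, h4, h3⟩
  simp only
  rw [hF _ hl, hc, SMZ.tr, SMZ.tr, Finset.sum_map]
  congr 2
  refine Finset.sum_congr rfl fun p _ => ?_
  rw [SMZ.tr, Finset.map_erase]

lemma Giambelli.step_neg {K n : ℕ} {x : ℂ} {F F' : Finset (ℕ × ℕ) → ℂ}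
    (hG : Giambelli K F) (hF : IsStep (-(n + 1)) x F F') : Giambelli K F' := by
  have h := hF.tr
  rw [neg_neg] at h
  have h2 := (hG.tr.step_pos h).tr
  have : ∀ D, SMZ.tr (SMZ.tr D) = D := fun D => by
    ext ⟨a, b⟩
    rw [mem_tr, mem_tr]
  simpa only [this] using h2

lemma mem_corners_zero {t : ℕ} {α β : ℕ → ℕ} (hα : Decr (t + 1) α) (hβ : Decr (t + 1) β)
    {a b : ℕ} :
    (a, b) ∈ corners (frob (t + 1) α β) 0 ↔ a = t ∧ b = t ∧ α t = 0 ∧ β t = 0 := by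
  rw [mem_corners]
  simp only [mem_frob, content]
  constructor
  · rintro ⟨h1, h2, h3, h4⟩
    have hab : a = b := by omega
    subst hab
    have hat : a = t := by
      by_contra h
      have := hα a t (by omega) (by omega)
      omega
    subst hat
    omega
  · rintro ⟨rfl, rfl, h1, h2⟩
    omega

lemma hook_step_zero {x : ℂ} {F F' : Finset (ℕ × ℕ) → ℂ} (hF : IsStep 0 x F F') (a b : ℕ) :
    F' (hook a b) = F (hook a b) + if a = 0 ∧ b = 0 then x * F ∅ else 0 := by
  rw [hF _ (hook_isLowerSet a b)]
  congr 1
  split_ifs with h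
  · obtain ⟨rfl, rfl⟩ := h
    have : corners (hook 0 0) 0 = {(0, 0)} := by
      ext ⟨i, j⟩
      rw [hook, mem_corners_zero (decr_one _) (decr_one _)]
      simp
    have h2 : (hook 0 0).erase (0, 0) = ∅ := by
      ext ⟨i, j⟩
      rw [Finset.mem_erase, mem_hook]
      simp only [ne_eq, Prod.mk.injEq, Finset.notMem_empty, iff_false]
      omega
    rw [this, Finset.sum_singleton, h2]
  · have : corners (hook a b) 0 = ∅ := by
      ext ⟨i, j⟩
      rw [hook, mem_corners_zero (decr_one _) (decr_one _)]
      simp only [Finset.notMem_empty, iff_false]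
      exact fun h' => h h'.2.2
    rw [this, Finset.sum_empty, mul_zero]

/-- A step of content `0` changes the last diagonal entry of the matrix, if at all, and the
determinant by the complementary minor. -/
lemma Giambelli.step_zero {K : ℕ} {x : ℂ} {F F' : Finset (ℕ × ℕ) → ℂ}
    (hG : Giambelli K F) (hF : IsStep 0 x F F') : Giambelli K F' := by
  have hempty : F ∅ = 1 := by
    have := hG 0 id id (fun i j _ h => by omega) (fun i j _ h => by omega)
      (fun i h => by omega) (fun i h => by omega)
    simpa [frob] using this
  intro t α β hα hβ hαK hβK
  rw [hF _ (frob_isLowerSet hα hβ), hG t α β hα hβ hαK hβK]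
  rcases t with _ | t
  · simp [frob, corners]
  by_cases h : α t = 0 ∧ β t = 0
  · have hc : corners (frob (t + 1) α β) 0 = {(t, t)} := by
      ext ⟨a, b⟩
      rw [mem_corners_zero hα hβ]
      simp [h]
    have he : (frob (t + 1) α β).erase (t, t) = frob t α β := by
      ext ⟨a, b⟩
      rw [Finset.mem_erase, mem_frob, mem_frob]
      simp only [ne_eq, Prod.mk.injEq]
      constructor
      · rintro ⟨h1, ⟨h2, h3, h4⟩ | ⟨h2, h3, h4⟩⟩
        · left
          have : a ≠ t := by rintro rfl; omega
          omega
        · right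
          have : b ≠ t := by rintro rfl; omega
          omega
      · omega
    have hM : hookMat F' (t + 1) α β = (hookMat F (t + 1) α β).updateRow (Fin.last t)
        (hookMat F (t + 1) α β (Fin.last t) + x • Pi.single (Fin.last t) 1) := by
      ext i' j'
      by_cases hii : i' = Fin.last t
      · subst hii
        by_cases hjj : j' = Fin.last t
        · subst hjj
          simp [hookMat, hook_step_zero hF, h, hempty]
        · have : β j' ≠ 0 := by
            have := hβ j' t (by have := Fin.val_lt_last hjj; omega) (by omega)
            omega
          simp [hookMat, hook_step_zero hF, this, hjj]
      · have : α i' ≠ 0 := by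
          have := hα i' t (by have := Fin.val_lt_last hii; omega) (by omega)
          omega
        rw [Matrix.updateRow_ne hii]
        simp [hookMat, hook_step_zero hF, this]
    rw [hM, Matrix.det_updateRow_add, Matrix.det_updateRow_smul, Matrix.updateRow_eq_self,
      ← Matrix.adjugate_apply, Matrix.adjugate_fin_succ_eq_det_submatrix, hc,
      Finset.sum_singleton, he, hG t α β (fun i j h1 h2 => hα i j h1 (by omega))
        (fun i j h1 h2 => hβ i j h1 (by omega)) (fun i h => hαK i (by omega))
        (fun i h => hβK i (by omega)), Even.neg_one_pow ⟨_, rfl⟩, one_mul]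
    congr 3
    ext i j
    simp [hookMat]
  · have hc : corners (frob (t + 1) α β) 0 = ∅ := by
      ext ⟨a, b⟩
      rw [mem_corners_zero hα hβ]
      simp only [Finset.notMem_empty, iff_false]
      tauto
    rw [hc, Finset.sum_empty, mul_zero, add_zero]
    congr 1
    ext i j
    have : ¬ (α i = 0 ∧ β j = 0) := by
      rintro ⟨h1, h2⟩
      have h3 := hα.add_le (i := i) (j := t) (by omega) (by omega)
      have h4 := hβ.add_le (i := j) (j := t) (by omega) (by omega)
      omega
    simp only [hookMat, Matrix.of_apply, hook_step_zero hF, if_neg this, add_zero]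

lemma Giambelli.step {K : ℕ} {k : ℤ} {x : ℂ} {F F' : Finset (ℕ × ℕ) → ℂ}
    (hG : Giambelli K F) (hF : IsStep k x F F') : Giambelli K F' := by
  rcases lt_trichotomy k 0 with h | rfl | h
  · obtain ⟨n, rfl⟩ : ∃ n : ℕ, k = -((n : ℤ) + 1) := ⟨(-k - 1).toNat, by omega⟩
    exact hG.step_neg hF
  · exact hG.step_zero hF
  · obtain ⟨n, rfl⟩ : ∃ n : ℕ, k = (n : ℤ) + 1 := ⟨(k - 1).toNat, by omega⟩
    exact hG.step_pos hF

lemma content_le_of_mem_frob {t K : ℕ} {α β : ℕ → ℕ} (hαK : ∀ i < t, α i ≤ K)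
    (hβK : ∀ i < t, β i ≤ K) {p : ℕ × ℕ} (hp : p ∈ frob t α β) :
    -(K : ℤ) ≤ content p ∧ content p ≤ K := by
  obtain ⟨a, b⟩ := p
  rw [mem_frob] at hp
  simp only [content]
  rcases hp with ⟨h1, h2, h3⟩ | ⟨h1, h2, h3⟩
  · have := hαK a h1
    omega
  · have := hβK b h1
    omega

lemma bddSum_congr (w : ℤ → ℕ → ℂ) {b b' : ℤ → ℕ} {D : Finset (ℕ × ℕ)}
    (h : ∀ p ∈ D, b (content p) = b' (content p)) : bddSum w b D = bddSum w b' D := by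
  have : bddTab D b = bddTab D b' := by
    ext m
    refine and_congr_right fun _ => forall₂_congr fun p hp => ?_
    rw [h p hp]
  simp only [bddSum, this]

lemma Giambelli.congr {K : ℕ} {F F' : Finset (ℕ × ℕ) → ℂ} (hG : Giambelli K F)
    (h : ∀ D : Finset (ℕ × ℕ), (∀ p ∈ D, -(K : ℤ) ≤ content p ∧ content p ≤ K) → F D = F' D) :
    Giambelli K F' := by
  intro t α β hα hβ hαK hβK
  rw [← h _ fun p hp => content_le_of_mem_frob hαK hβK hp, hG t α β hα hβ hαK hβK]
  congr 1
  ext i j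
  exact h _ fun p hp =>
    content_le_of_mem_frob (fun _ _ => hαK i i.2) (fun _ _ => hβK j j.2) hp

/-- With no entries allowed, only the empty diagram has a tableau. -/
lemma bddSum_zero (w : ℤ → ℕ → ℂ) {D : Finset (ℕ × ℕ)} (hD : D.Nonempty) :
    bddSum w (fun _ => 0) D = 0 := by
  obtain ⟨p, hp⟩ := hD
  have : (bddTab_finite D fun _ => 0).toFinset = ∅ := by
    ext m
    simp only [Set.Finite.mem_toFinset, Finset.notMem_empty, iff_false]
    intro hm
    have h1 := hm.1.pos p hp
    have h2 : m p ≤ 0 := hm.2 p hp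
    omega
  rw [bddSum, this, Finset.sum_empty]

lemma bddSum_empty (w : ℤ → ℕ → ℂ) (b : ℤ → ℕ) : bddSum w b ∅ = 1 := by
  have : (bddTab_finite ∅ b).toFinset = {0} := by
    ext m
    simp only [Set.Finite.mem_toFinset, Finset.mem_singleton]
    constructor
    · intro hm
      funext p
      exact hm.1.zero_off p (by simp)
    · rintro rfl
      exact ⟨⟨by simp, by simp, by simp, by simp⟩, by simp⟩
  rw [bddSum, this]
  simp [wt]

/-- The Giambelli formula for tableaux with entries at most `N`. -/
lemma giambelli_bddSum (w : ℤ → ℕ → ℂ) (K N : ℕ) : Giambelli K (bddSum w fun _ => N) := by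
  induction N with
  | zero =>
    intro t α β _ _ _ _
    rcases t with _ | t
    · simp [frob, bddSum_empty]
    · rw [bddSum_zero w ⟨(0, 0), mem_frob.2 (Or.inl ⟨by omega, by omega, by omega⟩)⟩]
      symm
      refine Matrix.det_eq_zero_of_row_eq_zero 0 fun j => ?_
      exact bddSum_zero w ⟨(0, 0), mem_hook.2 (Or.inl ⟨rfl, by omega⟩)⟩
  | succ N ih =>
    have key : ∀ d : ℕ, Giambelli K (bddSum w (stepBound N (-(K : ℤ) + d))) := by
      intro d
      induction d with
      | zero =>
        refine ih.congr fun D hD => bddSum_congr w fun p hp => ?_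
        have := hD p hp
        rw [stepBound, if_neg]
        push_cast
        omega
      | succ d ihd =>
        refine ihd.step (k := -(K : ℤ) + d) (x := w (-(K : ℤ) + d) (N + 1)) fun D hD => ?_
        rw [← bddSum_step w N _ hD]
        push_cast
        rw [add_assoc]
    refine (key (2 * K + 1)).congr fun D hD => bddSum_congr w fun p hp => ?_
    have := hD p hp
    rw [stepBound, if_pos]
    push_cast
    omega

end SMZ
namespace SMZ

/-! ### Convergence -/

/-- The weight `n ^ (-a k)` of the Schur multiple zeta function. -/
def zetaWt (a : ℤ → ℂ) (k : ℤ) (n : ℕ) : ℂ := (n : ℂ) ^ (-(a k))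

/-- For nonnegative summable `g`, the product series over `ι → ℕ` converges. -/
lemma summable_prod_of_summable {ι : Type*} [Fintype ι] {g : ℕ → ℝ} (hg0 : ∀ n, 0 ≤ g n)
    (hg : Summable g) : Summable fun f : ι → ℕ => ∏ i, g (f i) := by
  classical
  refine summable_of_sum_le (c := ∏ _i : ι, ∑' n, g n)
    (fun f => Finset.prod_nonneg fun i _ => hg0 _) fun u => ?_
  -- the finitely many functions in `u` take values in a finite set
  let T : Finset ℕ := u.biUnion fun f => Finset.univ.image f
  calc ∑ f ∈ u, ∏ i, g (f i) ≤ ∑ f ∈ Fintype.piFinset fun _ : ι => T, ∏ i, g (f i) := by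
        refine Finset.sum_le_sum_of_subset_of_nonneg (fun f hf => ?_)
          fun f _ _ => Finset.prod_nonneg fun i _ => hg0 _
        refine Fintype.mem_piFinset.2 fun i => Finset.mem_biUnion.2 ⟨f, hf, ?_⟩
        exact Finset.mem_image_of_mem f (Finset.mem_univ i)
    _ = ∏ _i : ι, ∑ n ∈ T, g n := Finset.sum_prod_piFinset T fun _ => g
    _ ≤ ∏ _i : ι, ∑' n, g n := Finset.prod_le_prod
        (fun i _ => Finset.sum_nonneg fun n _ => hg0 n)
        fun i _ => hg.sum_le_tsum T fun n _ => hg0 n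

/-- The largest entry of a tableau occurs at a corner. -/
lemma exists_corner_max {D : Finset (ℕ × ℕ)} (hD : D.Nonempty) {m : ℕ × ℕ → ℕ}
    (hm : SSYTOn D m) : ∃ c ∈ D, (c.1 + 1, c.2) ∉ D ∧ (c.1, c.2 + 1) ∉ D ∧
      ∀ p ∈ D, m p ≤ m c := by
  -- among the boxes with the largest entry, take one with the largest `i + j`
  obtain ⟨c, hc, hmax⟩ := D.exists_max_image (fun p => toLex (m p, p.1 + p.2)) hD
  have hmax' : ∀ p ∈ D, m p < m c ∨ m p = m c ∧ p.1 + p.2 ≤ c.1 + c.2 := fun p hp => by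
    simpa [Prod.Lex.toLex_le_toLex] using hmax p hp
  refine ⟨c, hc, fun h => ?_, fun h => ?_, fun p hp => ?_⟩
  · have h1 := hm.col_lt c.1 c.2 h
    have h2 := hmax' _ h
    simp only [Prod.mk.eta] at h1 h2
    omega
  · have h1 := hm.row_le c.1 c.2 h
    have h2 := hmax' _ h
    simp only [Prod.mk.eta] at h1 h2
    omega
  · have := hmax' p hp
    omega

lemma exists_gap (D : Finset (ℕ × ℕ)) (f : ℕ × ℕ → ℝ) :
    ∃ δ > 0, ∀ p ∈ D, 1 < f p → 1 + δ ≤ f p := by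
  classical
  induction D using Finset.induction_on with
  | empty => exact ⟨1, one_pos, by simp⟩
  | insert q D _ ih =>
    obtain ⟨δ, hδ, h⟩ := ih
    by_cases hq : 1 < f q
    · refine ⟨min δ (f q - 1), lt_min hδ (by linarith), fun p hp h1 => ?_⟩
      rcases Finset.mem_insert.1 hp with rfl | hp
      · linarith [min_le_right δ (f p - 1)]
      · linarith [h p hp h1, min_le_left δ (f q - 1)]
    · refine ⟨δ, hδ, fun p hp h1 => ?_⟩
      rcases Finset.mem_insert.1 hp with rfl | hp
      · exact absurd h1 hq
      · exact h p hp h1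

/-- Absolute convergence: the surplus exponent `δ` at the corner carrying the largest entry is
shared out evenly among all boxes, so that the series is dominated by a product of copies of
`∑ n ^ (-(1 + ε))`. -/
lemma summable_wt {D : Finset (ℕ × ℕ)} {a : ℤ → ℂ} (h1 : ∀ p ∈ D, 1 ≤ (a (content p)).re)
    (hc : ∀ p ∈ D, (p.1 + 1, p.2) ∉ D → (p.1, p.2 + 1) ∉ D → 1 < (a (content p)).re) :
    Summable fun m : {m : ℕ × ℕ → ℕ // SSYTOn D m} => wt (zetaWt a) D m.1 := by
  classical
  obtain ⟨δ, hδ, hgap⟩ := exists_gap D fun p => (a (content p)).re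
  set ε : ℝ := δ / (D.card + 1) with hε
  have hε0 : 0 < ε := by positivity
  have hεD : (D.card : ℝ) * ε ≤ δ := by
    rw [hε, mul_div_assoc', div_le_iff₀ (by positivity)]
    nlinarith
  have hg := (Real.summable_nat_rpow (p := -(1 + ε))).2 (by linarith)
  have hsum := summable_prod_of_summable (ι := D)
    (fun n => Real.rpow_nonneg (Nat.cast_nonneg n) (-(1 + ε))) hg
  have hinj : Function.Injective
      fun (m : {m : ℕ × ℕ → ℕ // SSYTOn D m}) (p : D) => m.1 p := fun m m' h =>
    Subtype.ext (restrict_injOn D m.2 m'.2 h)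
  refine Summable.of_norm_bounded (hsum.comp_injective hinj) fun ⟨m, hm⟩ => ?_
  have hpos : ∀ p ∈ D, (1 : ℝ) ≤ m p := fun p hp => by exact_mod_cast hm.pos p hp
  simp only [Function.comp_apply, wt, norm_prod]
  rw [Finset.prod_coe_sort D fun p => (m p : ℝ) ^ (-(1 + ε))]
  have hn : ∀ p ∈ D, ‖zetaWt a (content p) (m p)‖ = (m p : ℝ) ^ (-(a (content p)).re) :=
    fun p hp => by
      rw [zetaWt, Complex.norm_natCast_cpow_of_pos (hm.pos p hp), Complex.neg_re]
  rw [Finset.prod_congr rfl hn]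
  rcases D.eq_empty_or_nonempty with rfl | hne
  · simp
  obtain ⟨c, hcD, hc1, hc2, hmax⟩ := exists_corner_max hne hm
  calc ∏ p ∈ D, (m p : ℝ) ^ (-(a (content p)).re)
      ≤ ∏ p ∈ D, ((m p : ℝ) ^ (-1 : ℝ) * if p = c then (m c : ℝ) ^ (-δ) else 1) := by
        refine Finset.prod_le_prod (fun p hp => by positivity) fun p hp => ?_
        split_ifs with h
        · subst h
          rw [← Real.rpow_add (by linarith [hpos p hp])]
          exact Real.rpow_le_rpow_of_exponent_le (hpos p hp)
            (by linarith [hgap p hp (hc p hp hc1 hc2)])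
        · rw [mul_one]
          exact Real.rpow_le_rpow_of_exponent_le (hpos p hp) (by linarith [h1 p hp])
    _ = (∏ p ∈ D, (m p : ℝ) ^ (-1 : ℝ)) * (m c : ℝ) ^ (-δ) := by
        rw [Finset.prod_mul_distrib, Finset.prod_ite_eq' D c, if_pos hcD]
    _ ≤ (∏ p ∈ D, (m p : ℝ) ^ (-1 : ℝ)) * ∏ p ∈ D, (m p : ℝ) ^ (-ε) := by
        refine mul_le_mul_of_nonneg_left ?_ (Finset.prod_nonneg fun p _ => by positivity)
        calc (m c : ℝ) ^ (-δ) ≤ (m c : ℝ) ^ (-ε * D.card) :=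
              Real.rpow_le_rpow_of_exponent_le (hpos c hcD) (by linarith)
          _ = ∏ _p ∈ D, (m c : ℝ) ^ (-ε) := by
              rw [Finset.prod_const, Real.rpow_mul_natCast (by positivity)]
          _ ≤ ∏ p ∈ D, (m p : ℝ) ^ (-ε) := by
              refine Finset.prod_le_prod (fun p _ => by positivity) fun p hp => ?_
              exact Real.rpow_le_rpow_of_nonpos (by linarith [hpos p hp])
                (by exact_mod_cast hmax p hp) (by linarith)
    _ = ∏ p ∈ D, (m p : ℝ) ^ (-(1 + ε)) := by
        rw [← Finset.prod_mul_distrib]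
        refine Finset.prod_congr rfl fun p hp => ?_
        rw [← Real.rpow_add (by linarith [hpos p hp])]
        congr 1
        ring

/-- The bounded generating functions converge to the Schur multiple zeta value. -/
lemma tendsto_schurZeta {r : ℕ} {lam : ℕ → ℕ} {s : ℕ × ℕ → ℂ} {a : ℤ → ℂ}
    {D : Finset (ℕ × ℕ)} (hD : ∀ p, p ∈ D ↔ InDiag lam p) (hr : ∀ p ∈ D, p.1 < r)
    (hs : ∀ p ∈ D, s p = a (content p)) (h1 : ∀ p ∈ D, 1 ≤ (a (content p)).re)
    (hc : ∀ p ∈ D, (p.1 + 1, p.2) ∉ D → (p.1, p.2 + 1) ∉ D → 1 < (a (content p)).re) :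
    Filter.Tendsto (fun N : ℕ => bddSum (zetaWt a) (fun _ => N) D) Filter.atTop
      (nhds (schurZeta r lam s)) := by
  classical
  have hS : ∀ m, SSYTOn D m ↔ IsSSYT lam m := fun m => by
    constructor
    · rintro ⟨h1, h2, h3, h4⟩
      simp only [hD] at h1 h2 h3 h4
      exact ⟨h1, h2, h3, h4⟩
    · rintro ⟨h1, h2, h3, h4⟩
      simp only [← hD] at h1 h2 h3 h4
      exact ⟨h1, h2, h3, h4⟩
  have hterm : ∀ m, term r lam s m = wt (zetaWt a) D m := fun m => by
    rw [term, wt, Finset.prod_finset_product D (Finset.range r) fun i => Finset.range (lam i)]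
    · refine Finset.prod_congr rfl fun i hi => Finset.prod_congr rfl fun j hj => ?_
      rw [zetaWt, hs (i, j) ((hD _).2 (Finset.mem_range.1 hj))]
    · intro p
      rw [Finset.mem_range, Finset.mem_range]
      exact ⟨fun h => ⟨hr p h, (hD p).1 h⟩, fun h => (hD p).2 h.2⟩
  have hZ : schurZeta r lam s =
      ∑' m : {m : ℕ × ℕ → ℕ // SSYTOn D m}, wt (zetaWt a) D m.1 := by
    rw [schurZeta, ← (Equiv.subtypeEquivRight hS).tsum_eq]
    exact tsum_congr fun m => hterm _
  rw [hZ]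
  let A : ℕ → Finset {m : ℕ × ℕ → ℕ // SSYTOn D m} := fun N =>
    (bddTab_finite D fun _ => N).toFinset.subtype (SSYTOn D)
  have hmemA : ∀ N m, m ∈ A N ↔ ∀ p ∈ D, m.1 p ≤ N := fun N m => by
    simp only [A, Finset.mem_subtype, Set.Finite.mem_toFinset]
    exact ⟨fun h => h.2, fun h => ⟨m.2, h⟩⟩
  have hA : Filter.Tendsto A Filter.atTop Filter.atTop := by
    refine Filter.tendsto_atTop_finset_of_monotone (fun N N' hN m hm => ?_) fun m => ?_
    · rw [hmemA] at hm ⊢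
      exact fun p hp => (hm p hp).trans hN
    · exact ⟨D.sup m.1, (hmemA _ _).2 fun p hp => Finset.le_sup hp⟩
  have hlim := Filter.Tendsto.comp (summable_wt h1 hc).hasSum hA
  refine hlim.congr fun N => ?_
  exact Finset.sum_subtype_of_mem (wt (zetaWt a) D) fun m hm =>
    ((Set.Finite.mem_toFinset _).1 hm).1

/-! ### Frobenius coordinates of a partition -/

/-- A down-closed condition on `ℕ` is counted by its threshold. -/
lemma lt_card_filter_iff {r : ℕ} {P : ℕ → Prop} [DecidablePred P]
    (hP : ∀ i j, i ≤ j → P j → P i) (hr : ∀ i, P i → i < r) (i : ℕ) :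
    i < ((Finset.range r).filter P).card ↔ P i := by
  constructor
  · intro h
    by_contra hi
    have : (Finset.range r).filter P ⊆ Finset.range i := fun j hj => by
      rw [Finset.mem_filter] at hj
      rw [Finset.mem_range]
      by_contra hij
      exact hi (hP i j (by omega) hj.2)
    have := Finset.card_le_card this
    rw [Finset.card_range] at this
    omega
  · intro h
    have : Finset.range (i + 1) ⊆ (Finset.range r).filter P := fun j hj => by
      rw [Finset.mem_range] at hj
      have := hP j i (by omega) h
      exact Finset.mem_filter.2 ⟨Finset.mem_range.2 (hr j this), this⟩
    have := Finset.card_le_card this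
    rw [Finset.card_range] at this
    omega

lemma lt_conjPart {r : ℕ} {lam : ℕ → ℕ} (h : IsPartitionWith r lam) (i c : ℕ) :
    i < conjPart r lam c ↔ c < lam i :=
  lt_card_filter_iff (fun _ _ hij hj => hj.trans_le (h.1 hij))
    (fun i hi => (h.2 i).1 (by omega)) i

lemma lt_diagLength {r : ℕ} {lam : ℕ → ℕ} (h : IsPartitionWith r lam) (i : ℕ) :
    i < diagLength r lam ↔ i < lam i :=
  lt_card_filter_iff (fun _ _ hij hj => lt_of_le_of_lt hij (hj.trans_le (h.1 hij)))
    (fun i hi => (h.2 i).1 (by omega)) i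

lemma mem_frob_partition {r : ℕ} {lam : ℕ → ℕ} (h : IsPartitionWith r lam) (p : ℕ × ℕ) :
    p ∈ frob (diagLength r lam) (fun i => lam i - i - 1) (fun j => conjPart r lam j - j - 1) ↔
      InDiag lam p := by
  obtain ⟨a, b⟩ := p
  rw [mem_frob, lt_diagLength h, lt_diagLength h, InDiag]
  have h1 := lt_conjPart h a b
  have h2 := lt_conjPart h b b
  simp only
  constructor
  · rintro (h3 | h3) <;> omega
  · intro h3
    rcases le_total a b with h4 | h4
    · left; omega
    · right; omega

lemma decr_arm {r : ℕ} {lam : ℕ → ℕ} (h : IsPartitionWith r lam) :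
    Decr (diagLength r lam) fun i => lam i - i - 1 := by
  intro i j hij hj
  have h1 := (lt_diagLength h j).1 hj
  have h2 := h.1 hij.le
  simp only
  omega

lemma decr_leg {r : ℕ} {lam : ℕ → ℕ} (h : IsPartitionWith r lam) :
    Decr (diagLength r lam) fun j => conjPart r lam j - j - 1 := by
  intro i j hij hj
  have h1 := (lt_conjPart h j j).2 ((lt_diagLength h j).1 hj)
  have h2 : conjPart r lam j ≤ conjPart r lam i := by
    by_contra h3
    have h4 := (lt_conjPart h (conjPart r lam i) j).1 (by omega)
    have h5 := (lt_conjPart h (conjPart r lam i) i).2 (by omega)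
    omega
  simp only
  omega

lemma mem_hook_iff (p q : ℕ) (b : ℕ × ℕ) : b ∈ hook p q ↔ InDiag (hookLam (p + 1) q) b := by
  obtain ⟨i, j⟩ := b
  rw [mem_hook, InDiag, hookLam]
  simp only
  split_ifs <;> omega

end SMZ

/-- Giambelli formula for Schur multiple zeta functions: if
`λ = (p_1-1,…,p_t-1 | q_1,…,q_t)` in Frobenius notation, then `ζ_λ(s)` is the determinant
of the `ζ`-values of the hooks `(p_i, 1^{q_j})` filled with the diagonal values `a`. -/
theorem schurZeta_giambelli
    (r : ℕ) (lam : ℕ → ℕ) (hlam : SMZ.IsPartitionWith r lam)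
    (s : ℕ × ℕ → ℂ) (a : ℤ → ℂ)
    (hW : SMZ.MemW lam s)
    (hdiag : ∀ p : ℕ × ℕ, SMZ.InDiag lam p → s p = a ((p.2 : ℤ) - (p.1 : ℤ)))
    (hp : ∀ i < SMZ.diagLength r lam, 1 < (a ((lam i : ℤ) - (i : ℤ) - 1)).re)
    (hq : ∀ i < SMZ.diagLength r lam,
      1 < (a (-((SMZ.conjPart r lam i : ℤ) - (i : ℤ) - 1))).re) :
    SMZ.schurZeta r lam s =
      Matrix.det (Matrix.of fun i j : Fin (SMZ.diagLength r lam) =>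
        SMZ.schurZeta (SMZ.conjPart r lam (j : ℕ) - (j : ℕ))
          (SMZ.hookLam (lam (i : ℕ) - (i : ℕ)) (SMZ.conjPart r lam (j : ℕ) - ((j : ℕ) + 1)))
          (fun b => a ((b.2 : ℤ) - (b.1 : ℤ)))) := by
  set t := SMZ.diagLength r lam with ht
  set α : ℕ → ℕ := fun i => lam i - i - 1 with hα
  set β : ℕ → ℕ := fun j => SMZ.conjPart r lam j - j - 1 with hβ
  have hlt : ∀ i < t, i < lam i := fun i hi => (SMZ.lt_diagLength hlam i).1 hi
  have hlt' : ∀ j < t, j < SMZ.conjPart r lam j := fun j hj =>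
    (SMZ.lt_conjPart hlam j j).2 (hlt j hj)
  have hmem : ∀ p, p ∈ SMZ.frob t α β ↔ SMZ.InDiag lam p := SMZ.mem_frob_partition hlam
  have hre : ∀ p, SMZ.InDiag lam p → 1 ≤ (a (SMZ.content p)).re := fun p hp' => by
    rw [SMZ.content, ← hdiag p hp']
    exact hW.1 p hp'
  have hL : Filter.Tendsto
      (fun N : ℕ => SMZ.bddSum (SMZ.zetaWt a) (fun _ => N) (SMZ.frob t α β)) Filter.atTop
      (nhds (SMZ.schurZeta r lam s)) := by
    refine SMZ.tendsto_schurZeta hmem (fun p hp' => ?_) (fun p hp' => ?_) (fun p hp' => ?_)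
      fun p hp' h1 h2 => ?_
    · exact (hlam.2 p.1).1 (lt_of_le_of_lt (Nat.zero_le _) ((hmem p).1 hp'))
    · exact hdiag p ((hmem p).1 hp')
    · exact hre p ((hmem p).1 hp')
    · rw [hmem] at hp' h1 h2
      rw [SMZ.content, ← hdiag p hp']
      exact hW.2 p ⟨hp', h1, h2⟩
  have hR : ∀ i j : Fin t, Filter.Tendsto
      (fun N : ℕ => SMZ.bddSum (SMZ.zetaWt a) (fun _ => N) (SMZ.hook (α i) (β j))) Filter.atTop
      (nhds (SMZ.schurZeta (SMZ.conjPart r lam (j : ℕ) - (j : ℕ))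
        (SMZ.hookLam (lam (i : ℕ) - (i : ℕ)) (SMZ.conjPart r lam (j : ℕ) - ((j : ℕ) + 1)))
        (fun b => a ((b.2 : ℤ) - (b.1 : ℤ))))) := by
    intro i j
    have hi := hlt i i.2
    have hj := hlt' j j.2
    have e1 : lam (i : ℕ) - (i : ℕ) = α i + 1 := by simp only [hα]; omega
    have e2 : SMZ.conjPart r lam (j : ℕ) - ((j : ℕ) + 1) = β j := by simp only [hβ]; omega
    have e3 : SMZ.conjPart r lam (j : ℕ) - (j : ℕ) = β j + 1 := by simp only [hβ]; omega
    -- arm and leg ends of the hook are the ends of the `i`-th arm and `j`-th leg of `lam`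
    have harm : 1 < (a (α i)).re := by
      have := hp i i.2
      rwa [show (lam (i : ℕ) : ℤ) - (i : ℕ) - 1 = (α i : ℤ) by omega] at this
    have hleg : 1 < (a (-(β j : ℤ))).re := by
      have := hq j j.2
      rwa [show (SMZ.conjPart r lam (j : ℕ) : ℤ) - (j : ℕ) - 1 = (β j : ℤ) by omega] at this
    rw [e1, e2, e3]
    refine SMZ.tendsto_schurZeta (SMZ.mem_hook_iff _ _) ?_ (fun _ _ => rfl) ?_ ?_
    · rintro ⟨c, d⟩ h
      rw [SMZ.mem_hook] at h
      simp only
      omega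
    · rintro ⟨c, d⟩ h
      rw [SMZ.mem_hook] at h
      rcases h with ⟨rfl, h⟩ | ⟨rfl, h⟩
      · have := hre ((i : ℕ), (i : ℕ) + d) (by rw [SMZ.InDiag]; simp only; omega)
        rwa [show SMZ.content ((i : ℕ), (i : ℕ) + d) = SMZ.content (0, d) by
          simp only [SMZ.content]; omega] at this
      · have := hre ((j : ℕ) + c, (j : ℕ))
          ((SMZ.lt_conjPart hlam ((j : ℕ) + c) j).1 (by omega))
        rwa [show SMZ.content ((j : ℕ) + c, (j : ℕ)) = SMZ.content (c, 0) by
          simp only [SMZ.content]; omega] at this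
    · rintro ⟨c, d⟩ h h1 h2
      simp only [SMZ.mem_hook] at h h1 h2
      rcases h with ⟨rfl, h⟩ | ⟨rfl, h⟩
      · have : d = α i := by omega
        rwa [SMZ.content, this, show ((0, α i) : ℕ × ℕ).1 = 0 from rfl, Nat.cast_zero, sub_zero]
      · have : c = β j := by omega
        rwa [SMZ.content, this, show ((β j, 0) : ℕ × ℕ).2 = 0 from rfl, Nat.cast_zero, zero_sub]
  have hdet : Filter.Tendsto (fun N : ℕ =>
      (SMZ.hookMat (SMZ.bddSum (SMZ.zetaWt a) fun _ => N) t α β).det) Filter.atTop _ :=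
    ((Continuous.matrix_det continuous_id).tendsto _).comp
      (tendsto_pi_nhds.2 fun i => tendsto_pi_nhds.2 fun j => hR i j)
  refine tendsto_nhds_unique hL (hdet.congr fun N => ?_)
  symm
  -- any common bound on the arms and legs will do
  refine SMZ.giambelli_bddSum (SMZ.zetaWt a)
    ((Finset.range t).sup α + (Finset.range t).sup β) N t α β (SMZ.decr_arm hlam)
    (SMZ.decr_leg hlam) (fun i hi => ?_) fun i hi => ?_
  · exact (Finset.le_sup (f := α) (Finset.mem_range.2 hi)).trans (by omega)
  · exact (Finset.le_sup (f := β) (Finset.mem_range.2 hi)).trans (by omega)
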